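/- Consider an n-qubit system and a subset S_κ of n_κ qubits. Let U and U′ be independent random unitaries, each distributed according to the normalized Haar probability measure on U(2ⁿ), and let ρ₀, ρ₀′ be pure-state density matrices on n qubits. Define the random variable k = Tr[Tr_{S̄_κ}[U ρ₀ U†]·Tr_{S̄_κ}[U′ ρ₀′ U′†]]. Then Var[k] = (2^{2n_κ} − 1)/(2^{2n_κ}·(2ⁿ + 1)²) (variance part of Proposition 1). -/

import Mathlib

/-!
The random state `σ = U ρ U†` satisfies `E[σ ⊗ σ] = (1 + SWAP) / (D (D + 1))` with `D = 2ⁿ`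
(`moment_formula`); everything else is a contraction of this tensor.

The formula is obtained from left invariance of the Haar measure under two explicit families of
unitaries, all of the form `1 + (I - 1) P` with `P` an orthogonal projection. Taking `P` of range
`⟨eₐ⟩` shows that `E[σᵢⱼ σₖₗ]` vanishes unless `{i, k} = {j, l}` as multisets (`moment_eq_zero`).
Taking `P` of range `⟨eᵢ + eₖ⟩` gives `4 E[σᵢᵢ²] = E[σᵢᵢ²] + E[σₖₖ²] + 2 E[σᵢᵢ σₖₖ] + 2 E[σᵢₖ σₖᵢ]`
(`moment_pair`). Since `ρ` has rank one (`exists_vec_of_pure`), `σᵢⱼ σₖₗ = σᵢₗ σₖⱼ`, so these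
relations leave a single unknown constant, which `Tr σ = 1` determines.

Write `d = 2^{n_κ}` and `e = D / d`. The reduced state `A` has `E[A] = 1 / d` and
`E[A ⊗ A] = (e² + e SWAP) / (D (D + 1))`. By independence `E[k] = Tr(E[A]²) = 1 / d` and
`E[k²] = Tr(E[A ⊗ A]²) = (d² e⁴ + 2 d e³ + d² e²) / (D (D + 1))²`, whence the variance.
-/

open MeasureTheory Matrix ComplexOrder

noncomputable instance {ι : Type*} [Fintype ι] [DecidableEq ι] :
    MeasurableSpace (Matrix.unitaryGroup ι ℂ) := borel _

instance {ι : Type*} [Fintype ι] [DecidableEq ι] :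
    BorelSpace (Matrix.unitaryGroup ι ℂ) := ⟨rfl⟩

/-- Computational basis states of an `n`-qubit system. -/
abbrev QubitBasis (n : ℕ) := Fin n → Fin 2

/-- Combine an assignment on a subset `S` of qubits with one on its complement. -/
def mergeQ {n : ℕ} (S : Finset (Fin n)) (a : {i : Fin n // i ∈ S} → Fin 2)
    (b : {i : Fin n // i ∉ S} → Fin 2) : QubitBasis n :=
  fun i => if h : i ∈ S then a ⟨i, h⟩ else b ⟨i, h⟩

/-- Partial trace over the qubits outside `S` (i.e. `Tr_{S̄}`), producing an operator on
the qubits in `S`. -/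
noncomputable def ptraceCompl {n : ℕ} (S : Finset (Fin n))
    (A : Matrix (QubitBasis n) (QubitBasis n) ℂ) :
    Matrix ({i : Fin n // i ∈ S} → Fin 2) ({i : Fin n // i ∈ S} → Fin 2) ℂ :=
  Matrix.of fun a b =>
    ∑ c : {i : Fin n // i ∉ S} → Fin 2, A (mergeQ S a c) (mergeQ S b c)

/-- Extend an operator on the qubits in `S` to an `n`-qubit operator acting as the
identity on the qubits outside `S`. -/
noncomputable def embedQ {n : ℕ} (S : Finset (Fin n))
    (W : Matrix ({i : Fin n // i ∈ S} → Fin 2) ({i : Fin n // i ∈ S} → Fin 2) ℂ) :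
    Matrix (QubitBasis n) (QubitBasis n) ℂ :=
  Matrix.of fun x y =>
    (if ∀ i : {i : Fin n // i ∉ S}, x i.1 = y i.1 then (1 : ℂ) else 0) *
      W (fun i => x i.1) (fun i => y i.1)


/-! ### Pure states -/

/-- A density matrix of purity one has spectrum `{1, 0, …, 0}`, hence is a rank-one projector. -/
lemma exists_vec_of_pure {ι : Type*} [Fintype ι] [DecidableEq ι] {ρ : Matrix ι ι ℂ}
    (hρ : ρ.PosSemidef) (hρt : ρ.trace = 1) (hpure : (ρ * ρ).trace = 1) :
    ∃ v : ι → ℂ, ρ = vecMulVec v (star v) := by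
  classical
  have hH := hρ.isHermitian
  set lam := hH.eigenvalues with hlam
  have h1 : ∑ i, lam i = 1 := by
    have := hH.trace_eq_sum_eigenvalues
    rw [hρt] at this
    have h2 : ((∑ i, lam i : ℝ) : ℂ) = 1 := by push_cast; exact this.symm
    exact_mod_cast h2
  have hsp := hH.spectral_theorem
  have h2 : ∑ i, lam i ^ 2 = 1 := by
    have h3 : (ρ * ρ).trace = ∑ i, ((lam i : ℝ) : ℂ) ^ 2 := by
      conv_lhs => rw [hsp]
      rw [← map_mul, Unitary.conjStarAlgAut_apply, diagonal_mul_diagonal, Matrix.trace_mul_cycle]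
      simp [Matrix.trace_diagonal, hlam, pow_two]
    rw [hpure] at h3
    have h4 : ((∑ i, lam i ^ 2 : ℝ) : ℂ) = 1 := by push_cast; exact h3.symm
    exact_mod_cast h4
  have hnn : ∀ i, 0 ≤ lam i := fun i => hρ.eigenvalues_nonneg i
  have hle : ∀ i, lam i ≤ 1 := fun i => by
    rw [← h1]; exact Finset.single_le_sum (fun j _ => hnn j) (Finset.mem_univ i)
  have hz : ∀ i, lam i * (1 - lam i) = 0 := by
    have hs : ∑ i, lam i * (1 - lam i) = 0 := by
      have : ∀ i, lam i * (1 - lam i) = lam i - lam i ^ 2 := fun i => by ring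
      simp only [this, Finset.sum_sub_distrib, h1, h2, sub_self]
    intro i
    exact (Finset.sum_eq_zero_iff_of_nonneg
      (fun j _ => mul_nonneg (hnn j) (sub_nonneg.2 (hle j)))).1 hs i (Finset.mem_univ i)
  obtain ⟨i0, hi0⟩ : ∃ i, lam i ≠ 0 := by
    by_contra! hcon
    simp [hcon] at h1
  have hi1 : lam i0 = 1 := by
    rcases mul_eq_zero.1 (hz i0) with h | h
    · exact absurd h hi0
    · linarith
  have hoth : ∀ j, j ≠ i0 → lam j = 0 := by
    intro j hj
    have h5 : lam i0 + ∑ k ∈ Finset.univ.erase i0, lam k = 1 := by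
      rw [Finset.add_sum_erase _ _ (Finset.mem_univ i0), h1]
    have h6 : ∑ k ∈ Finset.univ.erase i0, lam k = 0 := by linarith
    exact (Finset.sum_eq_zero_iff_of_nonneg (fun k _ => hnn k)).1 h6 j (by simp [hj])
  refine ⟨fun i => (hH.eigenvectorUnitary : Matrix ι ι ℂ) i i0, ?_⟩
  ext i j
  conv_lhs => rw [hsp]
  rw [Unitary.conjStarAlgAut_apply, Matrix.mul_apply, Finset.sum_eq_single i0]
  · simp [Matrix.mul_diagonal, ← hlam, hi1, vecMulVec_apply, Matrix.star_apply]
  · intro k _ hk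
    simp [Matrix.mul_diagonal, ← hlam, hoth k hk]
  · simp

/-! ### Integrability on the unitary group -/

lemma compactSpace_unitaryGroup {ι : Type*} [Fintype ι] [DecidableEq ι] :
    CompactSpace (Matrix.unitaryGroup ι ℂ) := by
  have hcl : IsClosed ((Matrix.unitaryGroup ι ℂ : Set (Matrix ι ι ℂ))) := by
    have : (Matrix.unitaryGroup ι ℂ : Set (Matrix ι ι ℂ)) = {A | A * star A = 1} := by
      ext A; simp [Matrix.mem_unitaryGroup_iff]
    rw [this]
    exact isClosed_eq (by fun_prop) continuous_const
  have hK : IsCompact {A : Matrix ι ι ℂ | ∀ i, A i ∈ {r : ι → ℂ | ∀ j, r j ∈ Metric.closedBall (0 : ℂ) 1}} :=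
    isCompact_pi_infinite fun _ => isCompact_pi_infinite fun _ => isCompact_closedBall _ _
  refine isCompact_iff_compactSpace.1 (hK.of_isClosed_subset hcl ?_)
  intro A hA i j
  simpa using entry_norm_bound_of_unitary hA i j

lemma integrable_of_continuous_unitary {ι : Type*} [Fintype ι] [DecidableEq ι]
    {μ : Measure (Matrix.unitaryGroup ι ℂ)} [IsProbabilityMeasure μ]
    {f : Matrix.unitaryGroup ι ℂ → ℂ} (hf : Continuous f) : Integrable f μ := by
  have := compactSpace_unitaryGroup (ι := ι)
  exact hf.integrable_of_hasCompactSupport (HasCompactSupport.of_compactSpace f)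

/-! ### Second moments of a Haar-random pure state -/

/-- The randomly rotated state `U ρ U†`. -/
noncomputable def rotState {ι : Type*} [Fintype ι] [DecidableEq ι] (ρ : Matrix ι ι ℂ)
    (U : Matrix.unitaryGroup ι ℂ) : Matrix ι ι ℂ :=
  (U : Matrix ι ι ℂ) * ρ * star (U : Matrix ι ι ℂ)

section moments

variable {ι : Type*} [Fintype ι] [DecidableEq ι]

@[fun_prop]
lemma continuous_rotState (ρ : Matrix ι ι ℂ) (i j : ι) :
    Continuous fun U => rotState ρ U i j := by
  have : Continuous fun U => rotState ρ U := by unfold rotState; fun_prop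
  exact this.matrix_elem i j

lemma integrable_rotState_mul (μ : Measure (Matrix.unitaryGroup ι ℂ)) [IsProbabilityMeasure μ]
    (ρ : Matrix ι ι ℂ) (i j k l : ι) :
    Integrable (fun U => rotState ρ U i j * rotState ρ U k l) μ :=
  integrable_of_continuous_unitary ((continuous_rotState ρ i j).mul (continuous_rotState ρ k l))

lemma rotState_trace {ρ : Matrix ι ι ℂ} (hρt : ρ.trace = 1) (U : Matrix.unitaryGroup ι ℂ) :
    ∑ i, rotState ρ U i i = 1 := by
  change (rotState ρ U).trace = 1
  rw [rotState, Matrix.trace_mul_cycle, Unitary.star_mul_self_of_mem U.2, one_mul, hρt]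

/-- A rank-one matrix has vanishing `2 × 2` minors. -/
lemma rotState_swap {ρ : Matrix ι ι ℂ} {v : ι → ℂ} (hv : ρ = vecMulVec v (star v))
    (U : Matrix.unitaryGroup ι ℂ) (i j k l : ι) :
    rotState ρ U i j * rotState ρ U k l = rotState ρ U i l * rotState ρ U k j := by
  have h : rotState ρ U = vecMulVec ((U : Matrix ι ι ℂ) *ᵥ v)
      (star v ᵥ* star (U : Matrix ι ι ℂ)) := by
    rw [rotState, hv, Matrix.mul_vecMulVec, Matrix.vecMulVec_mul]
  simp only [h, vecMulVec_apply]
  ring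

lemma rotState_mul (ρ : Matrix ι ι ℂ) (V U : Matrix.unitaryGroup ι ℂ) :
    rotState ρ (V * U) = (V : Matrix ι ι ℂ) * rotState ρ U * star (V : Matrix ι ι ℂ) := by
  simp [rotState, Matrix.mul_assoc]

/-- The unitary acting as the phase `I` on the range of an orthogonal projection `P` and trivially
on its orthogonal complement. -/
lemma phase_mem_unitary {P : Matrix ι ι ℂ} (hP : P * P = P) (hs : star P = P) :
    1 + (Complex.I - 1) • P ∈ Matrix.unitaryGroup ι ℂ := by
  rw [Matrix.mem_unitaryGroup_iff]
  simp only [star_add, star_one, star_smul, hs, star_sub, Complex.star_def, Complex.conj_I,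
    add_mul, mul_add, one_mul, mul_one, smul_mul_smul_comm, hP]
  rw [add_assoc, ← add_smul, ← add_smul]
  rw [show (Complex.I - 1) + ((-Complex.I - 1) + (Complex.I - 1) * (-Complex.I - 1)) = 0 by
    linear_combination -Complex.I_mul_I]
  simp

/-- The two-point function of the random state. -/
noncomputable def moment (μ : Measure (Matrix.unitaryGroup ι ℂ)) (ρ : Matrix ι ι ℂ)
    (i j k l : ι) : ℂ := ∫ U, rotState ρ U i j * rotState ρ U k l ∂μ

variable (μ : Measure (Matrix.unitaryGroup ι ℂ)) [μ.IsHaarMeasure] (ρ : Matrix ι ι ℂ)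

/-- Invariance of the two-point function under left multiplication by a fixed unitary. -/
lemma moment_invariant {V : Matrix ι ι ℂ} (hV : V ∈ Matrix.unitaryGroup ι ℂ) (i j k l : ι) :
    moment μ ρ i j k l = ∫ U, (V * rotState ρ U * star V) i j * (V * rotState ρ U * star V) k l ∂μ := by
  rw [moment, ← integral_mul_left_eq_self _ (⟨V, hV⟩ : Matrix.unitaryGroup ι ℂ)]
  simp only [rotState_mul]

/-- The phase that the diagonal unitary with entry `I` at `a` gives to index `i`. -/
noncomputable def ph (a i : ι) : ℂ := if i = a then Complex.I else 1

lemma moment_phase (a i j k l : ι) :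
    moment μ ρ i j k l =
      (ph a i * star (ph a j) * (ph a k * star (ph a l))) * moment μ ρ i j k l := by
  have hP : (Matrix.diagonal (Pi.single a (1 : ℂ)) : Matrix ι ι ℂ) *
      Matrix.diagonal (Pi.single a (1 : ℂ)) = Matrix.diagonal (Pi.single a (1 : ℂ)) := by
    rw [Matrix.diagonal_mul_diagonal]
    congr 1; ext x
    by_cases h : x = a <;> simp [h]
  have hs : star (Matrix.diagonal (Pi.single a (1 : ℂ)) : Matrix ι ι ℂ) =
      Matrix.diagonal (Pi.single a (1 : ℂ)) := by
    rw [Matrix.star_eq_conjTranspose, Matrix.diagonal_conjTranspose]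
    congr 1; ext x
    by_cases h : x = a <;> simp [h]
  have hd : (1 + (Complex.I - 1) • Matrix.diagonal (Pi.single a (1 : ℂ)) : Matrix ι ι ℂ) =
      Matrix.diagonal (ph a) := by
    ext x y
    by_cases hxy : x = y
    · subst hxy
      by_cases h : x = a <;> simp [ph, h]
    · simp [hxy]
  have hV := phase_mem_unitary hP hs
  rw [hd] at hV
  conv_lhs => rw [moment_invariant μ ρ hV]
  rw [moment, ← integral_const_mul]
  congr 1; ext U
  simp only [Matrix.star_eq_conjTranspose, Matrix.diagonal_conjTranspose, Matrix.mul_diagonal,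
    Matrix.diagonal_mul, Pi.star_apply]
  ring

/-- Two-point functions vanish unless row and column indices agree as multisets. -/
lemma moment_eq_zero {i j k l : ι} (h : ¬ ((i = j ∧ k = l) ∨ (i = l ∧ k = j))) :
    moment μ ρ i j k l = 0 := by
  -- Some index occurs with different multiplicities in `(i, k)` and in `(j, l)`.
  have key : ∀ a, ph a i * star (ph a j) * (ph a k * star (ph a l)) ≠ 1 →
      moment μ ρ i j k l = 0 := by
    intro a ha
    have := moment_phase μ ρ a i j k l
    by_contra hne
    exact ha (mul_right_cancel₀ hne (by rw [one_mul]; exact this.symm))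
  have hI : Complex.I ≠ 1 := by simp [Complex.ext_iff]
  have hI' : -Complex.I ≠ 1 := by simp [Complex.ext_iff]
  have hm : (-1 : ℂ) ≠ 1 := by norm_num
  by_cases h1 : i = j
  · subst h1
    have h2 : k ≠ l := fun e => h (Or.inl ⟨rfl, e⟩)
    apply key k
    by_cases h3 : i = k <;> simp [ph, h2.symm, h3, hI]
  · by_cases h2 : i = l
    · subst h2
      have h3 : k ≠ j := fun e => h (Or.inr ⟨rfl, e⟩)
      apply key k
      by_cases h4 : i = k <;> simp [ph, h3.symm, h4, hI]
    · apply key i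
      by_cases h4 : k = i <;> simp [ph, Ne.symm h1, Ne.symm h2, h4, hI, hm]

variable [IsProbabilityMeasure μ]

/-- The orthogonal projection onto the span of `eᵢ + eₖ`. -/
noncomputable def pairProj (i k : ι) : Matrix ι ι ℂ :=
  (2⁻¹ : ℂ) • vecMulVec (Pi.single i 1 + Pi.single k 1) (Pi.single i 1 + Pi.single k 1)

/-- Invariance under the rotation by the phase `I` along `eᵢ + eₖ`, read off at the diagonal
entry `i`. -/
lemma moment_pair {i k : ι} (hik : i ≠ k) :
    4 * moment μ ρ i i i i = moment μ ρ i i i i + moment μ ρ k k k k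
      + 2 * moment μ ρ i i k k + 2 * moment μ ρ i k k i := by
  have hP : pairProj i k * pairProj i k = pairProj i k := by
    rw [pairProj, smul_mul_smul_comm, Matrix.vecMulVec_mul_vecMulVec]
    have h2 : (Pi.single i (1 : ℂ) + Pi.single k 1 : ι → ℂ) ⬝ᵥ (Pi.single i 1 + Pi.single k 1) = 2 := by
      simp [hik, hik.symm]
      norm_num
    rw [h2, Matrix.vecMulVec_smul, smul_smul]
    norm_num
  have hs : star (pairProj i k) = pairProj i k := by
    ext x y
    have hr : ∀ a b : ι, star ((Pi.single a (1 : ℂ) : ι → ℂ) b) = (Pi.single a (1 : ℂ) : ι → ℂ) b := by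
      intro a b
      by_cases h : b = a <;> simp [h]
    simp only [pairProj, vecMulVec_apply, Matrix.star_apply, Matrix.smul_apply, Pi.add_apply,
      smul_eq_mul, star_mul', star_add, hr, star_inv₀, star_ofNat]
    ring
  have hV := phase_mem_unitary hP hs
  set V := 1 + (Complex.I - 1) • pairProj i k with hVdef
  have hrow : ∀ x, V i x = (1 + Complex.I) / 2 * (Pi.single i (1 : ℂ) : ι → ℂ) x
      + (Complex.I - 1) / 2 * (Pi.single k (1 : ℂ) : ι → ℂ) x := by
    intro x
    by_cases h1 : x = i
    · subst h1
      simp [hVdef, pairProj, vecMulVec_apply, hik]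
      ring
    · simp [hVdef, pairProj, vecMulVec_apply, hik, Pi.single_apply, h1, Ne.symm h1]
      ring_nf
  have hent : ∀ A : Matrix ι ι ℂ, (V * A * star V) i i =
      2⁻¹ * (A i i + A k k - Complex.I * A i k + Complex.I * A k i) := by
    intro A
    have hV1 : ∀ y, (V * A) i y = (1 + Complex.I) / 2 * A i y + (Complex.I - 1) / 2 * A k y := by
      intro y
      simp only [Matrix.mul_apply, hrow, add_mul, Finset.sum_add_distrib, mul_assoc,
        ← Finset.mul_sum]
      simp [Pi.single_apply]
    have hV2 : (V * A * star V) i i = (V * A) i i * star ((1 + Complex.I) / 2)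
        + (V * A) i k * star ((Complex.I - 1) / 2) := by
      rw [Matrix.mul_apply]
      simp only [Matrix.star_apply, hrow, star_add, star_mul', mul_add, Finset.sum_add_distrib]
      simp [Pi.single_apply, apply_ite]
    rw [hV2, hV1, hV1]
    simp
    ring_nf
    simp only [Complex.I_sq]
    ring
  have hinv := moment_invariant μ ρ hV i i i i
  simp only [hent] at hinv
  have hexp : moment μ ρ i i i i = 4⁻¹ * (
      moment μ ρ i i i i + moment μ ρ k k k k + 2 * moment μ ρ i i k k + 2 * moment μ ρ i k k i
      - moment μ ρ i k i k - moment μ ρ k i k i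
      + 2 * Complex.I * (moment μ ρ i i k i + moment μ ρ k k k i
        - moment μ ρ i i i k - moment μ ρ k k i k)) := by
    refine hinv.trans ?_
    have hI := Complex.I_mul_I
    have hpt : ∀ A : Matrix ι ι ℂ,
        2⁻¹ * (A i i + A k k - Complex.I * A i k + Complex.I * A k i) *
          (2⁻¹ * (A i i + A k k - Complex.I * A i k + Complex.I * A k i)) =
        4⁻¹ * (A i i * A i i + A k k * A k k + 2 * (A i i * A k k) + 2 * (A i k * A k i)
          - A i k * A i k - A k i * A k i
          + 2 * Complex.I * (A i i * A k i + A k k * A k i - A i i * A i k - A k k * A i k)) := by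
      intro A
      linear_combination (4⁻¹ * (A i k - A k i) ^ 2) * hI
    simp only [hpt, moment]
    rw [integral_const_mul, integral_add, integral_sub, integral_sub, integral_add, integral_add,
      integral_add, integral_const_mul, integral_const_mul, integral_const_mul, integral_sub,
      integral_sub, integral_add]
    all_goals exact integrable_of_continuous_unitary (by fun_prop)
  have z1 : moment μ ρ i k i k = 0 := moment_eq_zero μ ρ (by tauto)
  have z2 : moment μ ρ k i k i = 0 := moment_eq_zero μ ρ (by tauto)
  have z3 : moment μ ρ i i k i = 0 := moment_eq_zero μ ρ (by tauto)
  have z4 : moment μ ρ k k k i = 0 := moment_eq_zero μ ρ (by tauto)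
  have z5 : moment μ ρ i i i k = 0 := moment_eq_zero μ ρ (by tauto)
  have z6 : moment μ ρ k k i k = 0 := moment_eq_zero μ ρ (by tauto)
  rw [z1, z2, z3, z4, z5, z6] at hexp
  linear_combination 4 * hexp

/-- The second moment of a Haar-random pure state in dimension `D` is
`(1 + SWAP) / (D (D + 1))`. -/
lemma moment_formula {ρ : Matrix ι ι ℂ} (hρt : ρ.trace = 1) {v : ι → ℂ}
    (hv : ρ = vecMulVec v (star v)) (i j k l : ι) :
    moment μ ρ i j k l = ((if i = j ∧ k = l then 1 else 0) + (if i = l ∧ k = j then 1 else 0)) /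
      ((Fintype.card ι : ℂ) * ((Fintype.card ι : ℂ) + 1)) := by
  have hswap : ∀ i j k l, moment μ ρ i j k l = moment μ ρ i l k j := fun i j k l => by
    simp only [moment, rotState_swap hv _ i j k l]
  have hcomm : ∀ i j k l, moment μ ρ i j k l = moment μ ρ k l i j := fun i j k l => by
    simp only [moment, mul_comm]
  set c := moment μ ρ i i i i / 2 with hc
  have hdiag : ∀ x, moment μ ρ x x x x = 2 * c := by
    intro x
    by_cases hx : x = i
    · subst hx; rw [hc]; ring
    · have h1 := moment_pair μ ρ hx
      have h2 := moment_pair μ ρ (Ne.symm hx)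
      rw [hswap x i i x] at h1
      rw [hswap i x x i] at h2
      have h3 := hcomm x x i i
      rw [hc]
      linear_combination 4⁻¹ * h1 - 4⁻¹ * h2 + h3
  have hoff : ∀ x y, x ≠ y → moment μ ρ x x y y = c := by
    intro x y hxy
    have h1 := moment_pair μ ρ hxy
    rw [hswap x y y x, hdiag, hdiag] at h1
    linear_combination -4⁻¹ * h1
  have hall : ∀ x y, moment μ ρ x x y y = c + if x = y then c else 0 := by
    intro x y
    by_cases hxy : x = y
    · subst hxy; rw [hdiag]; simp; ring
    · simp [hoff x y hxy, hxy]
  have hsum : ∑ x, ∑ y, moment μ ρ x x y y = 1 := by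
    simp only [moment]
    simp_rw [← integral_finsetSum _ fun y _ => integrable_rotState_mul μ ρ _ _ y y,
      ← Finset.mul_sum, rotState_trace hρt, mul_one]
    rw [← integral_finsetSum _ fun x _ => integrable_of_continuous_unitary (by fun_prop)]
    simp [rotState_trace hρt]
  simp only [hall, Finset.sum_add_distrib, Finset.sum_const, Finset.card_univ, nsmul_eq_mul,
    Finset.sum_ite_eq, Finset.mem_univ, if_true] at hsum
  have hD : (Fintype.card ι : ℂ) * ((Fintype.card ι : ℂ) + 1) ≠ 0 := by
    intro h0
    have : ((Fintype.card ι : ℂ) * ((Fintype.card ι : ℂ) + 1)) * c = 1 := by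
      linear_combination hsum
    rw [h0] at this
    simp at this
  have hcv : c = 1 / ((Fintype.card ι : ℂ) * ((Fintype.card ι : ℂ) + 1)) := by
    rw [eq_div_iff hD]
    linear_combination hsum
  by_cases h : (i = j ∧ k = l) ∨ (i = l ∧ k = j)
  · rcases h with ⟨rfl, rfl⟩ | ⟨rfl, rfl⟩
    · rw [hall, hcv]
      by_cases hik : i = k
      · subst hik; simp only [and_self, if_true]; ring
      · simp [hik]
    · rw [hswap, hall, hcv]
      by_cases hik : i = k
      · subst hik; simp only [and_self, if_true]; ring
      · simp [hik]
  · rw [moment_eq_zero μ ρ h]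
    push Not at h
    rw [if_neg (by tauto), if_neg (by tauto)]
    simp

lemma first_moment {ρ : Matrix ι ι ℂ} (hρt : ρ.trace = 1) {v : ι → ℂ}
    (hv : ρ = vecMulVec v (star v)) (i j : ι) :
    ∫ U, rotState ρ U i j ∂μ = (if i = j then 1 else 0) / (Fintype.card ι : ℂ) := by
  have h : ∫ U, rotState ρ U i j ∂μ = ∑ k, moment μ ρ i j k k := by
    simp only [moment]
    rw [← integral_finsetSum _ fun y _ => integrable_rotState_mul μ ρ _ _ y y]
    simp_rw [← Finset.mul_sum, rotState_trace hρt, mul_one]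
  have : Nonempty ι := ⟨i⟩
  have hD : (Fintype.card ι : ℂ) ≠ 0 := by exact_mod_cast Fintype.card_ne_zero
  have hD1 : (Fintype.card ι : ℂ) + 1 ≠ 0 := by exact_mod_cast Nat.succ_ne_zero (Fintype.card ι)
  rw [h]
  simp only [moment_formula μ hρt hv]
  rw [← Finset.sum_div, Finset.sum_add_distrib]
  by_cases hij : i = j
  · subst hij
    simp only [and_self, if_true, Finset.sum_const, Finset.card_univ, nsmul_eq_mul]
    have : ∑ x : ι, (if i = x ∧ x = i then (1 : ℂ) else 0) = 1 := by
      rw [Finset.sum_eq_single i] <;> simp +contextual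
    rw [this]
    field_simp
  · have : ∀ x : ι, ¬ (i = x ∧ x = j) := fun x ⟨h1, h2⟩ => hij (h1.trans h2)
    simp [hij, this]

end moments

/-! ### Moments of the reduced state -/

section reduced

variable {n : ℕ} (S : Finset (Fin n))

lemma mergeQ_inj (a b : {i : Fin n // i ∈ S} → Fin 2) (c d : {i : Fin n // i ∉ S} → Fin 2) :
    mergeQ S a c = mergeQ S b d ↔ a = b ∧ c = d := by
  constructor
  · intro h
    constructor
    · ext ⟨i, hi⟩
      have := congrFun h i
      simp only [mergeQ, hi, dif_pos] at this
      rw [this]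
    · ext ⟨i, hi⟩
      have := congrFun h i
      simp only [mergeQ, hi, not_false_eq_true, dif_neg] at this
      rw [this]
  · rintro ⟨rfl, rfl⟩; rfl

lemma ptraceCompl_conj {A : Matrix (QubitBasis n) (QubitBasis n) ℂ} (hA : A.IsHermitian) :
    (ptraceCompl S A).IsHermitian := by
  ext a b
  simp only [ptraceCompl, Matrix.conjTranspose_apply, Matrix.of_apply, star_sum, hA.apply]

lemma rotState_isHermitian {ι : Type*} [Fintype ι] [DecidableEq ι] {ρ : Matrix ι ι ℂ}
    (hρ : ρ.IsHermitian) (U : Matrix.unitaryGroup ι ℂ) : (rotState ρ U).IsHermitian := by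
  rw [rotState, Matrix.star_eq_conjTranspose]
  exact Matrix.isHermitian_mul_mul_conjTranspose _ hρ

@[fun_prop]
lemma continuous_ptrace_rotState (ρ : Matrix (QubitBasis n) (QubitBasis n) ℂ)
    (a b : {i : Fin n // i ∈ S} → Fin 2) :
    Continuous fun U => ptraceCompl S (rotState ρ U) a b := by
  simp only [ptraceCompl, Matrix.of_apply]
  fun_prop

variable (μ : Measure (Matrix.unitaryGroup (QubitBasis n) ℂ)) [μ.IsHaarMeasure]
  [IsProbabilityMeasure μ]

/-- The mean of the reduced state is maximally mixed. -/
lemma reduced_first {ρ : Matrix (QubitBasis n) (QubitBasis n) ℂ} (hρt : ρ.trace = 1)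
    {v : QubitBasis n → ℂ} (hv : ρ = vecMulVec v (star v)) {d e : ℂ}
    (he : (Fintype.card ({i : Fin n // i ∉ S} → Fin 2) : ℂ) = e)
    (hD : (Fintype.card (QubitBasis n) : ℂ) = d * e) (he0 : e ≠ 0)
    (a b : {i : Fin n // i ∈ S} → Fin 2) :
    ∫ U, ptraceCompl S (rotState ρ U) a b ∂μ = (if a = b then 1 else 0) / d := by
  simp only [ptraceCompl, Matrix.of_apply]
  rw [integral_finsetSum _ fun c _ => integrable_of_continuous_unitary (by fun_prop)]
  simp only [first_moment μ hρt hv, mergeQ_inj, and_true, Finset.sum_const, Finset.card_univ,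
    nsmul_eq_mul, he, hD]
  field_simp

/-- The second moment of the reduced state, the partial trace of `(1 + SWAP) / (D (D + 1))`. -/
lemma reduced_second {ρ : Matrix (QubitBasis n) (QubitBasis n) ℂ} (hρt : ρ.trace = 1)
    {v : QubitBasis n → ℂ} (hv : ρ = vecMulVec v (star v)) {D e : ℂ}
    (he : (Fintype.card ({i : Fin n // i ∉ S} → Fin 2) : ℂ) = e)
    (hD : (Fintype.card (QubitBasis n) : ℂ) = D)
    (a b a' b' : {i : Fin n // i ∈ S} → Fin 2) :
    ∫ U, ptraceCompl S (rotState ρ U) a b * ptraceCompl S (rotState ρ U) a' b' ∂μ =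
      ((if a = b ∧ a' = b' then 1 else 0) * e ^ 2 + (if a = b' ∧ a' = b then 1 else 0) * e) /
        (D * (D + 1)) := by
  simp only [ptraceCompl, Matrix.of_apply, Finset.sum_mul_sum]
  rw [integral_finsetSum _ fun c _ => integrable_of_continuous_unitary (by fun_prop)]
  simp_rw [integral_finsetSum _ fun c' _ => integrable_rotState_mul μ ρ _ _ (mergeQ S a' c') _]
  have hm := moment_formula μ hρt hv
  simp only [moment] at hm
  simp only [hm, hD, mergeQ_inj, and_true]
  simp only [← Finset.sum_div, Finset.sum_add_distrib, Finset.sum_const, Finset.card_univ,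
    nsmul_eq_mul, he]
  have hc : ∀ c c' : {i : Fin n // i ∉ S} → Fin 2,
      (if (a = b' ∧ c = c') ∧ a' = b ∧ c' = c then (1 : ℂ) else 0) =
        if c = c' then (if a = b' ∧ a' = b then 1 else 0) else 0 := by
    intro c c'
    by_cases h : c = c'
    · simp [h]
    · simp [h]
  simp only [hc, Finset.sum_ite_eq, Finset.mem_univ, if_true, Finset.sum_const, Finset.card_univ,
    nsmul_eq_mul, he]
  ring

end reduced

/-- The contractions `∑ δ_{ab} δ_{a'b'} = d²`, `∑ δ_{ab} δ_{a'b} δ_{ab'} = d` and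
`∑ δ_{a'b} δ_{ab'} = d²` over an index set of size `d`. -/
lemma sum_delta_terms {α : Type*} [Fintype α] [DecidableEq α] (x y z : ℂ) :
    ∑ a : α, ∑ b : α, ∑ a' : α, ∑ b' : α,
      ((if a = b then (if a' = b' then x else 0) else 0)
        + (if a = b then (if a' = b then (if a = b' then y else 0) else 0) else 0)
        + (if a' = b then (if a = b' then z else 0) else 0)) =
      (Fintype.card α : ℂ) ^ 2 * x + (Fintype.card α : ℂ) * y + (Fintype.card α : ℂ) ^ 2 * z := by
  have pull : ∀ (p : Prop) [Decidable p] (f : α → ℂ),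
      ∑ t, (if p then f t else 0) = if p then ∑ t, f t else 0 := by
    intro p _ f
    by_cases h : p <;> simp [h]
  simp only [Finset.sum_add_distrib, pull, Finset.sum_ite_eq, Finset.sum_ite_eq', Finset.mem_univ,
    if_true, Finset.sum_const, Finset.card_univ, nsmul_eq_mul]
  ring

/-! ### The variance -/

/-- variance part of Proposition 1.  Let `U`, `U′` be independent and
Haar distributed on `U(2ⁿ)` (modeled by the product measure `μ.prod μ`), and let `ρ₀`,
`ρ₀′` be pure-state density matrices on `n` qubits.  For the projected-quantum-kernel
random variable `k = Tr[Tr_{S̄_κ}[U ρ₀ U†]·Tr_{S̄_κ}[U′ ρ₀′ U′†]]`,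
`Var[k] = (2^{2n_κ} − 1)/(2^{2n_κ}·(2ⁿ + 1)²)`. -/
theorem haar_variance_projected_kernel
    (n nκ : ℕ) (Sκ : Finset (Fin n)) (hκ : Sκ.card = nκ)
    (μ : Measure (Matrix.unitaryGroup (QubitBasis n) ℂ))
    [μ.IsHaarMeasure] [IsProbabilityMeasure μ]
    (ρ₀ ρ₀' : Matrix (QubitBasis n) (QubitBasis n) ℂ)
    (hρ : ρ₀.PosSemidef) (hρt : ρ₀.trace = 1) (hpure : (ρ₀ * ρ₀).trace = 1)
    (hρ' : ρ₀'.PosSemidef) (hρt' : ρ₀'.trace = 1) (hpure' : (ρ₀' * ρ₀').trace = 1) :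
    ProbabilityTheory.variance
      (fun p : Matrix.unitaryGroup (QubitBasis n) ℂ × Matrix.unitaryGroup (QubitBasis n) ℂ =>
        ((ptraceCompl Sκ ((p.1 : Matrix (QubitBasis n) (QubitBasis n) ℂ) * ρ₀ *
              star (p.1 : Matrix (QubitBasis n) (QubitBasis n) ℂ)) *
          ptraceCompl Sκ ((p.2 : Matrix (QubitBasis n) (QubitBasis n) ℂ) * ρ₀' *
              star (p.2 : Matrix (QubitBasis n) (QubitBasis n) ℂ))).trace).re)
      (μ.prod μ)
      = ((2 : ℝ) ^ (2 * nκ) - 1) / ((2 : ℝ) ^ (2 * nκ) * ((2 : ℝ) ^ n + 1) ^ 2) := by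
  classical
  obtain ⟨v, hv⟩ := exists_vec_of_pure hρ hρt hpure
  obtain ⟨v', hv'⟩ := exists_vec_of_pure hρ' hρt' hpure'
  set A := fun U => ptraceCompl Sκ (rotState ρ₀ U) with hA
  set B := fun U => ptraceCompl Sκ (rotState ρ₀' U) with hB
  set k : Matrix.unitaryGroup (QubitBasis n) ℂ × Matrix.unitaryGroup (QubitBasis n) ℂ → ℂ :=
    fun p => (A p.1 * B p.2).trace with hk
  change ProbabilityTheory.variance (fun p => (k p).re) (μ.prod μ) = _
  have hkre : ∀ p, ((k p).re : ℂ) = k p := by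
    intro p
    rw [← Complex.conj_eq_iff_re]
    change star (A p.1 * B p.2).trace = _
    rw [← Matrix.trace_conjTranspose, Matrix.conjTranspose_mul,
      (ptraceCompl_conj Sκ (rotState_isHermitian hρ.isHermitian p.1)).eq,
      (ptraceCompl_conj Sκ (rotState_isHermitian hρ'.isHermitian p.2)).eq, Matrix.trace_mul_comm]
  have hksum : ∀ p, k p = ∑ a, ∑ b, A p.1 a b * B p.2 b a := fun p => by
    simp [hk, Matrix.trace, Matrix.mul_apply]
  have hksq : ∀ p, k p ^ 2 = ∑ a, ∑ b, ∑ a', ∑ b',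
      (A p.1 a b * A p.1 a' b') * (B p.2 b a * B p.2 b' a') := fun p => by
    rw [pow_two, hksum]
    simp only [Finset.sum_mul, Finset.mul_sum]
    refine Finset.sum_congr rfl fun a _ => ?_
    refine Finset.sum_congr rfl fun b _ => ?_
    refine Finset.sum_congr rfl fun a' _ => ?_
    refine Finset.sum_congr rfl fun b' _ => ?_
    ring
  have hAc : ∀ a b, Continuous fun U => A U a b := continuous_ptrace_rotState Sκ ρ₀
  have hBc : ∀ a b, Continuous fun U => B U a b := continuous_ptrace_rotState Sκ ρ₀'
  have hi1 : ∀ a b, Integrable (fun p : Matrix.unitaryGroup (QubitBasis n) ℂ ×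
      Matrix.unitaryGroup (QubitBasis n) ℂ => A p.1 a b * B p.2 b a) (μ.prod μ) := fun a b =>
    Integrable.mul_prod (f := fun U => A U a b) (g := fun U => B U b a)
      (integrable_of_continuous_unitary (hAc a b))
      (integrable_of_continuous_unitary (hBc b a))
  have hi2 : ∀ a b a' b', Integrable (fun p : Matrix.unitaryGroup (QubitBasis n) ℂ ×
      Matrix.unitaryGroup (QubitBasis n) ℂ =>
        (A p.1 a b * A p.1 a' b') * (B p.2 b a * B p.2 b' a')) (μ.prod μ) := fun a b a' b' =>
    Integrable.mul_prod (f := fun U => A U a b * A U a' b') (g := fun U => B U b a * B U b' a')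
      (integrable_of_continuous_unitary ((hAc a b).mul (hAc a' b')))
      (integrable_of_continuous_unitary ((hBc b a).mul (hBc b' a')))
  have hkint : Integrable k (μ.prod μ) := by
    simp only [funext hksum]
    exact integrable_finsetSum _ fun a _ => integrable_finsetSum _ fun b _ => hi1 a b
  have hk2int : Integrable (fun p => k p ^ 2) (μ.prod μ) := by
    simp only [hksq]
    exact integrable_finsetSum _ fun a _ => integrable_finsetSum _ fun b _ =>
      integrable_finsetSum _ fun a' _ => integrable_finsetSum _ fun b' _ => hi2 a b a' b'
  set d : ℂ := 2 ^ nκ with hd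
  -- The dimension of the traced-out factor; `d` is that of the kept one.
  set e : ℂ := (Fintype.card ({i : Fin n // i ∉ Sκ} → Fin 2) : ℂ) with he
  have hdcard : (Fintype.card ({i : Fin n // i ∈ Sκ} → Fin 2) : ℂ) = d := by
    simp [hd, hκ]
  have hle : nκ ≤ n := by
    rw [← hκ]; simpa using Finset.card_le_univ Sκ
  have hepow : e = 2 ^ (n - nκ) := by
    simp [he, Fintype.card_subtype_compl, hκ]
  have hde : (2 : ℂ) ^ n = d * e := by
    rw [hd, hepow, ← pow_add, Nat.add_sub_cancel' hle]
  have hDcard : (Fintype.card (QubitBasis n) : ℂ) = d * e := by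
    rw [← hde]; simp
  have hd0 : d ≠ 0 := by simp [hd]
  have he0 : e ≠ 0 := by simp [hepow]
  have hD1 : d * e + 1 ≠ 0 := by
    rw [← hde]; exact_mod_cast Nat.succ_ne_zero (2 ^ n)
  have hEk : ∫ p, k p ∂(μ.prod μ) = 1 / d := by
    simp only [hksum]
    rw [integral_finsetSum _ fun a _ => integrable_finsetSum _ fun b _ => hi1 a b]
    simp_rw [integral_finsetSum _ fun b _ => hi1 _ b]
    have : ∀ a b, ∫ p, A p.1 a b * B p.2 b a ∂(μ.prod μ) =
        if a = b then 1 / d ^ 2 else 0 := by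
      intro a b
      rw [integral_prod_mul (fun U => A U a b) (fun U => B U b a),
        reduced_first Sκ μ hρt hv he.symm hDcard he0, reduced_first Sκ μ hρt' hv' he.symm hDcard he0]
      by_cases h : a = b
      · subst h; simp; ring
      · simp [h]
    simp only [this, Finset.sum_ite_eq, Finset.mem_univ, if_true, Finset.sum_const,
      Finset.card_univ, nsmul_eq_mul, hdcard]
    field_simp
  have hEk2 : ∫ p, k p ^ 2 ∂(μ.prod μ) =
      (d ^ 2 * e ^ 4 + 2 * d * e ^ 3 + d ^ 2 * e ^ 2) / (d * e * (d * e + 1)) ^ 2 := by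
    simp only [hksq]
    rw [integral_finsetSum _ fun a _ => integrable_finsetSum _ fun b _ =>
      integrable_finsetSum _ fun a' _ => integrable_finsetSum _ fun b' _ => hi2 a b a' b']
    simp_rw [integral_finsetSum _ fun b _ =>
      integrable_finsetSum _ fun a' _ => integrable_finsetSum _ fun b' _ => hi2 _ b a' b']
    simp_rw [integral_finsetSum _ fun a' _ => integrable_finsetSum _ fun b' _ => hi2 _ _ a' b']
    simp_rw [integral_finsetSum _ fun b' _ => hi2 _ _ _ b']
    have : ∀ a b a' b', ∫ p, (A p.1 a b * A p.1 a' b') * (B p.2 b a * B p.2 b' a') ∂(μ.prod μ) =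
        ((if a = b then (if a' = b' then e ^ 4 else 0) else 0)
          + (if a = b then (if a' = b then (if a = b' then 2 * e ^ 3 else 0) else 0) else 0)
          + (if a' = b then (if a = b' then e ^ 2 else 0) else 0)) /
          (d * e * (d * e + 1)) ^ 2 := by
      intro a b a' b'
      rw [integral_prod_mul (fun U => A U a b * A U a' b') (fun U => B U b a * B U b' a'),
        reduced_second Sκ μ hρt hv he.symm hDcard, reduced_second Sκ μ hρt' hv' he.symm hDcard]
      rw [div_mul_div_comm, ← pow_two (d * e * (d * e + 1))]
      congr 1
      by_cases h1 : a = b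
      · subst h1
        by_cases h2 : a' = b'
        · subst h2
          by_cases h3 : a = a'
          · subst h3; simp; ring
          · simp [h3, Ne.symm h3]; ring
        · by_cases h3 : a' = a
          · subst h3; simp [h2]
          · simp [h2, Ne.symm h2, h3, Ne.symm h3]
      · by_cases h2 : a' = b
        · subst h2
          by_cases h3 : a = b'
          · subst h3; simp [h1, Ne.symm h1]; ring
          · simp [h1, Ne.symm h1, h3, Ne.symm h3]
        · simp [h1, Ne.symm h1, h2, Ne.symm h2]
    simp only [this, ← Finset.sum_div]
    congr 1
    rw [sum_delta_terms, hdcard]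
    ring
  have hmem : MemLp (fun p => (k p).re) 2 (μ.prod μ) := by
    refine (memLp_two_iff_integrable_sq hkint.re.aestronglyMeasurable).2 ?_
    refine hk2int.re.congr (Filter.Eventually.of_forall fun p => ?_)
    change (k p ^ 2).re = (k p).re ^ 2
    rw [← hkre p]
    simp [← Complex.ofReal_pow]
  rw [ProbabilityTheory.variance_eq_sub hmem]
  have h1 : ((∫ p, (k p).re ∂(μ.prod μ) : ℝ) : ℂ) = 1 / d := by
    rw [← hEk, ← integral_complex_ofReal]
    simp only [hkre]
  have h2 : ((∫ p, ((fun p => (k p).re) ^ 2) p ∂(μ.prod μ) : ℝ) : ℂ) =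
      (d ^ 2 * e ^ 4 + 2 * d * e ^ 3 + d ^ 2 * e ^ 2) / (d * e * (d * e + 1)) ^ 2 := by
    rw [← hEk2, ← integral_complex_ofReal]
    simp only [Pi.pow_apply, Complex.ofReal_pow, hkre]
  apply Complex.ofReal_injective
  push_cast
  rw [h1, h2, mul_comm 2 nκ, pow_mul, ← hd, hde]
  field_simp
  ring
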